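/- Assume the standing assumptions and that A is recurrent. Then there exists a non-zero almost β₀-harmonic vector for A; it is unique up to multiplication by non-negative scalars; and it is β₀-harmonic for A. -/

import Mathlib

/-!
Let `p = e^β₀` and let `o` be a recurrent vertex. By the renewal equation `U = 1 + F U` between the
generating functions `U` of the return weights `A^n_{oo}` and `F` of the first-return weights
`r_{oo}(n)`, divergence of `U` at its critical point `p⁻¹` forces `F(p⁻¹) = 1`. Splitting off the
first step of a path shows that `v ↦ ∑ r_{vo}(n) p⁻ⁿ` is then an eigenvector for `p`; cofinality
makes it finite, so it is harmonic. It is also the least vector with value `1` at `o` that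
dominates `p⁻¹ A` times itself. An almost harmonic `ξ` therefore dominates `ξ_o` times it, and the
difference is an almost harmonic vector vanishing at `o`, which cofinality forces to be zero.
-/

open scoped ENNReal
open Filter

variable {V : Type*}

/-- The set of vertices of the graph of `A` that emit no edges or infinitely many edges. -/
def VInf (A : V → V → ℝ≥0∞) : Set V :=
  {v | {w | A v w ≠ 0} = ∅ ∨ {w | A v w ≠ 0}.Infinite}

/-- A set of vertices is hereditary if every edge with source in it has range in it. -/
def Hereditary (A : V → V → ℝ≥0∞) (H : Set V) : Prop :=
  ∀ ⦃v w : V⦄, v ∈ H → A v w ≠ 0 → w ∈ H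

/-- A set of vertices is saturated if it contains every finite emitter all of whose
out-neighbours lie in it. -/
def Saturated (A : V → V → ℝ≥0∞) (H : Set V) : Prop :=
  ∀ v : V, v ∉ VInf A → (∀ w, A v w ≠ 0 → w ∈ H) → v ∈ H

/-- `A` is cofinal if the only hereditary and saturated subsets are `∅` and `V`. -/
def Cofinal (A : V → V → ℝ≥0∞) : Prop :=
  ∀ H : Set V, Hereditary A H → Saturated A H → H = ∅ ∨ H = Set.univ

/-- Matrix powers of `A`, with entries in `[0,∞]`. -/
noncomputable def Apow [DecidableEq V] (A : V → V → ℝ≥0∞) : ℕ → V → V → ℝ≥0∞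
  | 0 => fun v w => if v = w then 1 else 0
  | n + 1 => fun v w => ∑' u, A v u * Apow A n u w

/-- `e^β` as an extended nonnegative real. -/
noncomputable def expb (β : ℝ) : ℝ≥0∞ := ENNReal.ofReal (Real.exp β)

/-- `e^{-nβ}` as an extended nonnegative real. -/
noncomputable def expn (β : ℝ) (n : ℕ) : ℝ≥0∞ := ENNReal.ofReal (Real.exp (-(n : ℝ) * β))

/-- A vector `ξ : V → [0,∞)` is almost `β`-harmonic for `A` if
`∑_w A_{vw} ξ_w = e^β ξ_v` off `V_∞` and `∑_w A_{vw} ξ_w ≤ e^β ξ_v` on `V_∞`. -/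
def IsAlmostHarmonic (A : V → V → ℝ≥0∞) (β : ℝ) (ξ : V → ℝ≥0∞) : Prop :=
  (∀ v, ξ v ≠ ⊤) ∧
  (∀ v, v ∉ VInf A → ∑' w, A v w * ξ w = expb β * ξ v) ∧
  (∀ v, v ∈ VInf A → ∑' w, A v w * ξ w ≤ expb β * ξ v)

/-- A vector `ξ : V → [0,∞)` is `β`-harmonic for `A` if `∑_w A_{vw} ξ_w = e^β ξ_v`
for every vertex `v`. -/
def IsHarmonic (A : V → V → ℝ≥0∞) (β : ℝ) (ξ : V → ℝ≥0∞) : Prop :=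
  (∀ v, ξ v ≠ ⊤) ∧ ∀ v, ∑' w, A v w * ξ w = expb β * ξ v

/-- The non-wandering vertices: those admitting a loop of positive length. -/
def NW (A : V → V → ℝ≥0∞) : Set V :=
  {v | Relation.TransGen (fun a b => A a b ≠ 0) v v}

/-- Standing assumptions i)–iii): `A` is cofinal, the graph has no sinks, the entries of
`A` are finite and all powers of `A` have finite entries. -/
def Standing [DecidableEq V] (A : V → V → ℝ≥0∞) : Prop :=
  Cofinal A ∧ (∀ v, ∃ w, A v w ≠ 0) ∧ (∀ v w, A v w ≠ ⊤) ∧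
    ∀ (n : ℕ) (v w : V), Apow A n v w ≠ ⊤

/-- A function `k` supported on `V_∞` is `β`-summable when
`∑_{u ∈ V_∞} ∑_n e^{-nβ} A^n_{uu} k_u < ∞`. -/
def BSummable [DecidableEq V] (A : V → V → ℝ≥0∞) (β : ℝ) (k : V → ℝ≥0∞) : Prop :=
  (∀ u, u ∉ VInf A → k u = 0) ∧ (∑' u, ∑' n, expn β n * Apow A n u u * k u) ≠ ⊤

/-- `k̂_v = ∑_{u ∈ V_∞} ∑_n e^{-nβ} A^n_{vu} k_u` (for `k` supported on `V_∞`). -/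
noncomputable def khat [DecidableEq V] (A : V → V → ℝ≥0∞) (β : ℝ) (k : V → ℝ≥0∞) (v : V) :
    ℝ≥0∞ :=
  ∑' u, ∑' n, expn β n * Apow A n v u * k u

/-- The first-return quantities `r_{vw}(n)`: `r_{vw}(0) = 0`, `r_{vw}(1) = A_{vw}` and
`r_{vw}(n+1) = ∑_{u ≠ w} A_{vu} r_{uw}(n)` for `n ≥ 1`. -/
noncomputable def fr [DecidableEq V] (A : V → V → ℝ≥0∞) (w : V) : ℕ → V → ℝ≥0∞
  | 0 => fun _ => 0
  | 1 => fun v => A v w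
  | n + 2 => fun v => ∑' u, if u = w then 0 else A v u * fr A w (n + 1) u

open Finset.HasAntidiagonal (antidiagonal mem_antidiagonal)

section PowerSeries

theorem tsum_mul_pow_le_of_forall_lt {a : ℕ → ℝ≥0∞} {q c : ℝ≥0∞} (hq : q ≠ 0)
    (h : ∀ t < q, ∑' n, a n * t ^ n ≤ c) : ∑' n, a n * q ^ n ≤ c := by
  have : (nhdsWithin q (Set.Iio q)).NeBot :=
    nhdsLT_neBot_of_exists_lt ⟨0, pos_iff_ne_zero.mpr hq⟩
  rw [ENNReal.tsum_eq_iSup_sum]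
  refine iSup_le fun s => ?_
  have hlim : Tendsto (fun t => ∑ n ∈ s, a n * t ^ n) (nhdsWithin q (Set.Iio q))
      (nhds (∑ n ∈ s, a n * q ^ n)) :=
    tendsto_finsetSum s fun n _ => ENNReal.Tendsto.const_mul
      (((ENNReal.continuous_pow n).tendsto q).mono_left nhdsWithin_le_nhds)
      (Or.inl (pow_ne_zero n hq))
  exact le_of_tendsto hlim <| eventually_mem_nhdsWithin.mono fun t ht =>
    (ENNReal.sum_le_tsum s).trans (h t ht)

theorem tsum_ne_top_of_eventually_le_pow {b : ℕ → ℝ≥0∞} (hb : ∀ n, b n ≠ ⊤) {x : ℝ≥0∞}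
    (hx : x < 1) (h : ∀ᶠ n in atTop, b n ≤ x ^ n) : ∑' n, b n ≠ ⊤ := by
  obtain ⟨N, hN⟩ := eventually_atTop.mp h
  rw [← ENNReal.summable.sum_add_tsum_nat_add' (k := N)]
  refine ENNReal.add_ne_top.mpr ⟨ENNReal.sum_ne_top.mpr fun n _ => hb n, ?_⟩
  have hgeom : ∑' n, x ^ n ≠ ⊤ := by
    rw [ENNReal.tsum_geometric]
    exact ENNReal.inv_ne_top.mpr (tsub_pos_of_lt hx).ne'
  refine ne_top_of_le_ne_top hgeom (ENNReal.tsum_le_tsum fun n => ?_)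
  exact (hN (n + N) le_add_self).trans (pow_le_pow_right_of_le_one' hx.le le_self_add)

theorem tsum_mul_pow_ne_top_of_limsup_lt {a : ℕ → ℝ≥0∞} (ha : ∀ n, a n ≠ ⊤) {t : ℝ≥0∞}
    (ht : limsup (fun n : ℕ => a n ^ ((n : ℝ)⁻¹)) atTop < t⁻¹) :
    ∑' n, a n * t ^ n ≠ ⊤ := by
  have htop : t ≠ ⊤ := ENNReal.inv_ne_zero.mp ht.ne_bot
  obtain ⟨r, hr, hrt⟩ := exists_between ht
  have hrt1 : r * t < 1 := by
    rwa [← ENNReal.lt_div_iff_mul_lt (.inr hrt.ne_top) (.inl htop), one_div]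
  refine tsum_ne_top_of_eventually_le_pow
    (fun n => ENNReal.mul_ne_top (ha n) (ENNReal.pow_ne_top htop)) hrt1 ?_
  filter_upwards [eventually_lt_of_limsup_lt hr, eventually_gt_atTop 0] with n hn hn0
  have han : a n ≤ r ^ n := by
    rw [← ENNReal.rpow_natCast, ← ENNReal.rpow_inv_le_iff (by positivity)]
    exact hn.le
  rw [mul_pow]
  gcongr

theorem tsum_sum_antidiagonal_mul (f g : ℕ → ℝ≥0∞) :
    ∑' n, ∑ p ∈ antidiagonal n, f p.1 * g p.2 = (∑' n, f n) * ∑' n, g n := by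
  simp_rw [← ENNReal.tsum_mul_right, ← ENNReal.tsum_mul_left]
  rw [← ENNReal.tsum_prod (f := fun i j => f i * g j),
    ← Finset.HasAntidiagonal.sigmaAntidiagonalEquivProd.tsum_eq, ENNReal.tsum_sigma']
  refine tsum_congr fun n => ?_
  rw [tsum_fintype]
  exact (Finset.sum_coe_sort (antidiagonal n) fun p => f p.1 * g p.2).symm

end PowerSeries

/-- `u` is the renewal sequence of the weights `f`: `u n` is the total weight of the compositions
of `n`, a composition being weighted by the product of the `f i` over its parts `i ≥ 1`. In the
recursion below, a nonempty composition is split at its first part. -/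
structure IsRenewal (f u : ℕ → ℝ≥0∞) : Prop where
  weight_zero : f 0 = 0
  zero : u 0 = 1
  succ : ∀ n, u (n + 1) = ∑ p ∈ antidiagonal (n + 1), f p.1 * u p.2

namespace IsRenewal

variable {f u : ℕ → ℝ≥0∞}

theorem tsum_mul_pow_eq (h : IsRenewal f u) (t : ℝ≥0∞) :
    ∑' n, u n * t ^ n = 1 + (∑' n, f n * t ^ n) * ∑' n, u n * t ^ n := by
  have hcoeff : ∀ n, ∑ p ∈ antidiagonal n, f p.1 * t ^ p.1 * (u p.2 * t ^ p.2) =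
      (∑ p ∈ antidiagonal n, f p.1 * u p.2) * t ^ n := fun n => by
    rw [Finset.sum_mul]
    refine Finset.sum_congr rfl fun p hp => ?_
    rw [← mem_antidiagonal.mp hp]
    ring
  rw [← tsum_sum_antidiagonal_mul, tsum_congr hcoeff, tsum_eq_zero_add' ENNReal.summable,
    tsum_eq_zero_add' (f := fun n => (∑ p ∈ antidiagonal n, f p.1 * u p.2) * t ^ n)
      ENNReal.summable]
  simp [h.zero, h.weight_zero, h.succ]

theorem tsum_weight_lt_one (h : IsRenewal f u) {t : ℝ≥0∞} (hU : ∑' n, u n * t ^ n ≠ ⊤) :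
    ∑' n, f n * t ^ n < 1 := by
  by_contra! hF
  refine (ENNReal.lt_add_right hU one_ne_zero).not_ge ?_
  nth_rw 2 [h.tsum_mul_pow_eq t]
  rw [add_comm]
  gcongr
  exact le_mul_of_one_le_left zero_le hF

theorem tsum_mul_pow_le_inv (h : IsRenewal f u) {t c : ℝ≥0∞} (hU : ∑' n, u n * t ^ n ≠ ⊤)
    (hc : ∑' n, f n * t ^ n ≤ c) : ∑' n, u n * t ^ n ≤ (1 - c)⁻¹ := by
  rw [ENNReal.le_inv_iff_mul_le, ENNReal.mul_sub fun _ _ => hU, mul_one, tsub_le_iff_right]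
  nth_rw 1 [h.tsum_mul_pow_eq t, mul_comm]
  gcongr

theorem tsum_weight_eq_one (h : IsRenewal f u) {q : ℝ≥0∞} (hq : q ≠ 0)
    (hlt : ∀ t < q, ∑' n, u n * t ^ n ≠ ⊤) (htop : ∑' n, u n * q ^ n = ⊤) :
    ∑' n, f n * q ^ n = 1 := by
  refine le_antisymm
    (tsum_mul_pow_le_of_forall_lt hq fun t ht => (h.tsum_weight_lt_one (hlt t ht)).le) ?_
  by_contra! hF
  have hU : ∑' n, u n * q ^ n ≤ (1 - ∑' n, f n * q ^ n)⁻¹ :=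
    tsum_mul_pow_le_of_forall_lt hq fun t ht => h.tsum_mul_pow_le_inv (hlt t ht)
      (ENNReal.tsum_le_tsum fun n => by gcongr)
  rw [htop, top_le_iff, ENNReal.inv_eq_top, tsub_eq_zero_iff_le] at hU
  exact hU.not_gt hF

end IsRenewal

/-- The action `ξ ↦ A ξ` of a `V × V` matrix on vectors, both with entries in `[0,∞]`. -/
noncomputable def matrixOp (A : V → V → ℝ≥0∞) : (V → ℝ≥0∞) →ₗ[ℝ≥0∞] V → ℝ≥0∞ where
  toFun ξ v := ∑' w, A v w * ξ w
  map_add' ξ η := by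
    ext v
    simp only [Pi.add_apply, mul_add, ENNReal.tsum_add]
  map_smul' c ξ := by
    ext v
    simp only [Pi.smul_apply, smul_eq_mul, RingHom.id_apply, ← ENNReal.tsum_mul_left,
      mul_left_comm]

theorem matrixOp_apply (A : V → V → ℝ≥0∞) (ξ : V → ℝ≥0∞) (v : V) :
    matrixOp A ξ v = ∑' w, A v w * ξ w :=
  rfl

theorem matrixOp_mono (A : V → V → ℝ≥0∞) : Monotone (matrixOp A) := fun _ _ h _ =>
  ENNReal.tsum_le_tsum fun w => mul_le_mul_right (h w) _

theorem matrixOp_tsum {ι : Type*} (A : V → V → ℝ≥0∞) (f : ι → V → ℝ≥0∞) (v : V) :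
    matrixOp A (fun w => ∑' i, f i w) v = ∑' i, matrixOp A (f i) v := by
  simp only [matrixOp_apply, ← ENNReal.tsum_mul_left]
  exact ENNReal.tsum_comm

section FirstReturn

variable [DecidableEq V]

/-- The matrix `A` with its column `o` erased: it weights the paths that avoid `o` after their
start. -/
def taboo (A : V → V → ℝ≥0∞) (o v w : V) : ℝ≥0∞ :=
  if w = o then 0 else A v w

/-- The generating function `∑_n r_{vo}(n) t^n` of the first-return quantities. -/
noncomputable def frSeries (A : V → V → ℝ≥0∞) (o : V) (t : ℝ≥0∞) (v : V) : ℝ≥0∞ :=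
  ∑' n, fr A o n v * t ^ n

variable (A : V → V → ℝ≥0∞) (o : V)

theorem matrixOp_eq_smul_add_taboo (ξ : V → ℝ≥0∞) :
    matrixOp A ξ = ξ o • (fun v => A v o) + matrixOp (taboo A o) ξ := by
  ext v
  simp only [matrixOp_apply, Pi.add_apply, Pi.smul_apply, smul_eq_mul, taboo, ite_mul, zero_mul]
  rw [ENNReal.tsum_eq_add_tsum_ite o, mul_comm]
  congr!

theorem fr_add_two (n : ℕ) : fr A o (n + 2) = matrixOp (taboo A o) (fr A o (n + 1)) := by
  ext v
  simp only [matrixOp_apply, taboo, ite_mul, zero_mul, fr]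

theorem Apow_succ_column (n : ℕ) :
    (fun v => Apow A (n + 1) v o) = matrixOp A fun v => Apow A n v o :=
  rfl

theorem Apow_succ_column_eq_sum_antidiagonal (n : ℕ) :
    (fun v => Apow A (n + 1) v o) =
      ∑ p ∈ antidiagonal (n + 1), Apow A p.2 o o • fr A o p.1 := by
  have h_zero : fr A o 0 = 0 := rfl
  induction n with
  | zero =>
    ext v
    simp [Apow, fr, Finset.Nat.antidiagonal_succ]
  | succ n ih =>
    rw [Finset.Nat.sum_antidiagonal_succ, Finset.Nat.sum_antidiagonal_succ, h_zero, smul_zero,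
      zero_add, Apow_succ_column, matrixOp_eq_smul_add_taboo A o, ih,
      Finset.Nat.sum_antidiagonal_succ, h_zero, smul_zero, zero_add, map_sum]
    simp only [map_smul, ← fr_add_two]
    rfl

theorem isRenewal_fr_Apow : IsRenewal (fun n => fr A o n o) fun n => Apow A n o o where
  weight_zero := rfl
  zero := if_pos rfl
  succ n := by
    have h := congrFun (Apow_succ_column_eq_sum_antidiagonal A o n) o
    simpa only [Finset.sum_apply, Pi.smul_apply, smul_eq_mul, mul_comm] using h

theorem frSeries_apply_eq_tsum_succ (t : ℝ≥0∞) (v : V) :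
    frSeries A o t v = ∑' n, (t ^ (n + 1) • fr A o (n + 1)) v := by
  rw [frSeries, tsum_eq_zero_add' ENNReal.summable]
  simp [fr, mul_comm]

theorem pow_smul_fr_add_two (t : ℝ≥0∞) (n : ℕ) :
    t ^ (n + 2) • fr A o (n + 2) =
      t • matrixOp (taboo A o) (t ^ (n + 1) • fr A o (n + 1)) := by
  rw [map_smul, fr_add_two, smul_smul, pow_succ' t (n + 1)]

theorem sum_range_pow_smul_fr_succ (t : ℝ≥0∞) (N : ℕ) :
    ∑ n ∈ Finset.range (N + 1), t ^ (n + 1) • fr A o (n + 1) =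
      t • ((fun v => A v o) +
        matrixOp (taboo A o) (∑ n ∈ Finset.range N, t ^ (n + 1) • fr A o (n + 1))) := by
  rw [Finset.sum_range_succ', add_comm, smul_add, map_sum, Finset.smul_sum, zero_add, pow_one]
  simp only [pow_smul_fr_add_two]
  rfl

theorem frSeries_eq (t : ℝ≥0∞) :
    frSeries A o t = t • ((fun v => A v o) + matrixOp (taboo A o) (frSeries A o t)) := by
  ext v
  calc frSeries A o t v
      = t * A v o + ∑' n, (t • matrixOp (taboo A o) (t ^ (n + 1) • fr A o (n + 1))) v := by
        simp only [← pow_smul_fr_add_two]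
        rw [frSeries_apply_eq_tsum_succ, tsum_eq_zero_add' ENNReal.summable]
        simp only [zero_add, pow_one, fr, Pi.smul_apply, smul_eq_mul]
    _ = t * (A v o + matrixOp (taboo A o) (frSeries A o t) v) := by
        simp only [Pi.smul_apply, smul_eq_mul, ENNReal.tsum_mul_left, mul_add]
        rw [← matrixOp_tsum, ← funext (frSeries_apply_eq_tsum_succ A o t)]

variable {A o}

theorem smul_matrixOp_frSeries {t : ℝ≥0∞} (h : frSeries A o t o = 1) :
    t • matrixOp A (frSeries A o t) = frSeries A o t := by
  rw [matrixOp_eq_smul_add_taboo A o, h, one_smul, ← frSeries_eq]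

theorem smul_frSeries_le_of_smul_matrixOp_le {t : ℝ≥0∞} {ξ : V → ℝ≥0∞}
    (hξ : t • matrixOp A ξ ≤ ξ) : ξ o • frSeries A o t ≤ ξ := by
  have hpartial : ∀ N, ξ o • ∑ n ∈ Finset.range N, t ^ (n + 1) • fr A o (n + 1) ≤ ξ := by
    intro N
    induction N with
    | zero => simp
    | succ N ih =>
      refine le_trans ?_ hξ
      rw [sum_range_pow_smul_fr_succ, smul_comm, smul_add, ← map_smul,
        matrixOp_eq_smul_add_taboo A o ξ]
      gcongr
      exact matrixOp_mono _ ih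
  intro v
  rw [Pi.smul_apply, frSeries_apply_eq_tsum_succ, smul_eq_mul, ← ENNReal.tsum_mul_left,
    ENNReal.tsum_eq_iSup_nat]
  refine iSup_le fun N => le_of_eq_of_le ?_ (hpartial N v)
  simp only [Pi.smul_apply, Finset.sum_apply, smul_eq_mul, Finset.mul_sum]

end FirstReturn

theorem expb_ne_zero (β : ℝ) : expb β ≠ 0 :=
  (ENNReal.ofReal_pos.mpr (Real.exp_pos β)).ne'

theorem expb_ne_top (β : ℝ) : expb β ≠ ⊤ :=
  ENNReal.ofReal_ne_top

theorem expn_eq_inv_pow (β : ℝ) (n : ℕ) : expn β n = (expb β)⁻¹ ^ n := by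
  rw [expn, expb, ← ENNReal.ofReal_inv_of_pos (Real.exp_pos β), ← Real.exp_neg,
    ← ENNReal.ofReal_pow (Real.exp_pos _).le, ← Real.exp_nat_mul, neg_mul_comm]

section Harmonic

variable {A : V → V → ℝ≥0∞} {β : ℝ} {ξ η : V → ℝ≥0∞}

theorem finite_setOf_ne_zero_of_notMem_VInf {v : V} (hv : v ∉ VInf A) :
    {w | A v w ≠ 0}.Finite :=
  Set.not_infinite.mp fun h => hv (Or.inr h)

theorem matrixOp_eq_zero_iff {v : V} : matrixOp A ξ v = 0 ↔ ∀ w, A v w ≠ 0 → ξ w = 0 := by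
  simp only [matrixOp_apply, ENNReal.tsum_eq_zero, mul_eq_zero, or_iff_not_imp_left, ne_eq]

theorem ne_top_of_matrixOp_ne_top {v w : V} (h : matrixOp A ξ v ≠ ⊤) (hvw : A v w ≠ 0) :
    ξ w ≠ ⊤ := by
  intro hw
  exact ENNReal.ne_top_of_tsum_ne_top h w (by rw [hw, ENNReal.mul_top hvw])

theorem matrixOp_ne_top_of_notMem_VInf (hA : ∀ v w, A v w ≠ ⊤) {v : V} (hv : v ∉ VInf A)
    (h : ∀ w, A v w ≠ 0 → ξ w ≠ ⊤) : matrixOp A ξ v ≠ ⊤ := by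
  have hfin := finite_setOf_ne_zero_of_notMem_VInf hv
  rw [matrixOp_apply, tsum_eq_sum (s := hfin.toFinset) fun w hw => ?_]
  · exact ENNReal.sum_ne_top.mpr fun w hw =>
      ENNReal.mul_ne_top (hA v w) (h w (hfin.mem_toFinset.mp hw))
  · rw [not_not.mp fun h0 => hw (hfin.mem_toFinset.mpr h0), zero_mul]

theorem Cofinal.mem_of_mem (hcof : Cofinal A) {H : Set V} (hher : Hereditary A H)
    (hsat : Saturated A H) {o : V} (ho : o ∈ H) (v : V) : v ∈ H := by
  rcases hcof H hher hsat with rfl | rfl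
  · exact absurd ho (Set.notMem_empty o)
  · exact Set.mem_univ v

theorem Cofinal.ne_top_of_matrixOp_eq_smul (hcof : Cofinal A) (hA : ∀ v w, A v w ≠ ⊤)
    {c : ℝ≥0∞} (hc : c ≠ 0) (hc' : c ≠ ⊤) (hξ : matrixOp A ξ = c • ξ) {o : V} (ho : ξ o ≠ ⊤)
    (v : V) : ξ v ≠ ⊤ := by
  have hiff : ∀ v, ξ v ≠ ⊤ ↔ matrixOp A ξ v ≠ ⊤ := fun v => by
    simp [hξ, ENNReal.mul_eq_top, hc, hc']
  refine hcof.mem_of_mem (H := {v | ξ v ≠ ⊤}) ?_ ?_ ho v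
  · exact fun v w hv hvw => ne_top_of_matrixOp_ne_top ((hiff v).mp hv) hvw
  · exact fun v hv hw => (hiff v).mpr (matrixOp_ne_top_of_notMem_VInf hA hv hw)

theorem IsHarmonic.isAlmostHarmonic (h : IsHarmonic A β ξ) : IsAlmostHarmonic A β ξ :=
  ⟨h.1, fun v _ => h.2 v, fun v _ => (h.2 v).le⟩

theorem IsHarmonic.smul (h : IsHarmonic A β ξ) {c : ℝ≥0∞} (hc : c ≠ ⊤) :
    IsHarmonic A β (c • ξ) := by
  refine ⟨fun v => ENNReal.mul_ne_top hc (h.1 v), fun v => ?_⟩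
  rw [← matrixOp_apply, map_smul, Pi.smul_apply, matrixOp_apply, h.2 v]
  exact mul_left_comm _ _ _

theorem IsAlmostHarmonic.matrixOp_le (h : IsAlmostHarmonic A β ξ) :
    matrixOp A ξ ≤ expb β • ξ := fun v => by
  by_cases hv : v ∈ VInf A
  · exact h.2.2 v hv
  · exact (h.2.1 v hv).le

theorem IsAlmostHarmonic.sub (hξ : IsAlmostHarmonic A β ξ) (hη : IsHarmonic A β η)
    (hle : η ≤ ξ) : IsAlmostHarmonic A β (ξ - η) := by
  have hadd : ξ - η + η = ξ := tsub_add_cancel_of_le hle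
  have hop : ∀ v, matrixOp A (ξ - η) v + expb β * η v = matrixOp A ξ v := fun v => by
    rw [← hη.2 v, ← matrixOp_apply, ← Pi.add_apply, ← map_add, hadd]
  have hsmul : ∀ v, expb β * (ξ - η) v + expb β * η v = expb β * ξ v := fun v => by
    rw [← mul_add, ← Pi.add_apply, hadd]
  have hfin : ∀ v, expb β * η v ≠ ⊤ := fun v => ENNReal.mul_ne_top (expb_ne_top β) (hη.1 v)
  refine ⟨fun v => ENNReal.sub_ne_top (hξ.1 v), fun v hv => ?_, fun v hv => ?_⟩
  · rw [← matrixOp_apply, ← ENNReal.add_left_inj (hfin v), hop, hsmul]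
    exact hξ.2.1 v hv
  · rw [← matrixOp_apply, ← ENNReal.add_le_add_iff_right (hfin v), hop, hsmul]
    exact hξ.2.2 v hv

theorem IsAlmostHarmonic.eq_zero_of_apply_eq_zero (hcof : Cofinal A)
    (hξ : IsAlmostHarmonic A β ξ) {o : V} (ho : ξ o = 0) : ξ = 0 := by
  funext v
  refine hcof.mem_of_mem (H := {v | ξ v = 0}) ?_ ?_ ho v
  · intro v w (hv : ξ v = 0) hvw
    have hop : matrixOp A ξ v = 0 := by simpa [hv] using hξ.matrixOp_le v
    exact matrixOp_eq_zero_iff.mp hop w hvw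
  · intro v hv hw
    have hop : expb β * ξ v = 0 := (hξ.2.1 v hv).symm.trans (matrixOp_eq_zero_iff.mpr hw)
    exact (mul_eq_zero.mp hop).resolve_left (expb_ne_zero β)

variable [DecidableEq V] {o : V}

theorem IsAlmostHarmonic.smul_frSeries_le (hξ : IsAlmostHarmonic A β ξ) (o : V) :
    ξ o • frSeries A o (expb β)⁻¹ ≤ ξ := by
  refine smul_frSeries_le_of_smul_matrixOp_le fun v => ?_
  exact (ENNReal.inv_mul_le_iff (expb_ne_zero β) (expb_ne_top β)).mpr (hξ.matrixOp_le v)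

theorem isHarmonic_frSeries (hcof : Cofinal A) (hA : ∀ v w, A v w ≠ ⊤)
    (h : frSeries A o (expb β)⁻¹ o = 1) : IsHarmonic A β (frSeries A o (expb β)⁻¹) := by
  have heigen : matrixOp A (frSeries A o (expb β)⁻¹) = expb β • frSeries A o (expb β)⁻¹ := by
    nth_rw 2 [← smul_matrixOp_frSeries h]
    rw [smul_smul, ENNReal.mul_inv_cancel (expb_ne_zero β) (expb_ne_top β), one_smul]
  exact ⟨hcof.ne_top_of_matrixOp_eq_smul hA (expb_ne_zero β) (expb_ne_top β) heigen
    (h.trans_ne ENNReal.one_ne_top), congrFun heigen⟩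

theorem IsAlmostHarmonic.eq_smul_frSeries (hcof : Cofinal A) (hA : ∀ v w, A v w ≠ ⊤)
    (h : frSeries A o (expb β)⁻¹ o = 1) (hξ : IsAlmostHarmonic A β ξ) :
    ξ = ξ o • frSeries A o (expb β)⁻¹ := by
  have hharm : IsHarmonic A β (ξ o • frSeries A o (expb β)⁻¹) :=
    (isHarmonic_frSeries hcof hA h).smul (hξ.1 o)
  have hdom := hξ.smul_frSeries_le o
  have hzero : ξ - ξ o • frSeries A o (expb β)⁻¹ = 0 :=
    (hξ.sub hharm hdom).eq_zero_of_apply_eq_zero hcof (o := o) (by simp [h])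
  exact le_antisymm (tsub_eq_zero_iff_le.mp hzero) hdom

theorem frSeries_self_eq_one (hpow : ∀ n, Apow A n o o ≠ ⊤)
    (hlim : limsup (fun n : ℕ => Apow A n o o ^ ((n : ℝ)⁻¹)) atTop ≤ expb β)
    (hrec : ∑' n, Apow A n o o * expn β n = ⊤) : frSeries A o (expb β)⁻¹ o = 1 := by
  simp_rw [expn_eq_inv_pow] at hrec
  refine (isRenewal_fr_Apow A o).tsum_weight_eq_one (ENNReal.inv_ne_zero.mpr (expb_ne_top β))
    (fun t ht => ?_) hrec
  exact tsum_mul_pow_ne_top_of_limsup_lt hpow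
    (hlim.trans_lt (ENNReal.lt_inv_iff_lt_inv.mp ht))

end Harmonic

theorem stmt8_general [DecidableEq V] {A : V → V → ℝ≥0∞} (hcof : Cofinal A)
    (hA : ∀ v w, A v w ≠ ⊤) {β : ℝ} {o : V} (hpow : ∀ n, Apow A n o o ≠ ⊤)
    (hlim : limsup (fun n : ℕ => Apow A n o o ^ ((n : ℝ)⁻¹)) atTop ≤ expb β)
    (hrec : ∑' n, Apow A n o o * expn β n = ⊤) :
    ∃ ξ : V → ℝ≥0∞, IsHarmonic A β ξ ∧ ξ ≠ 0 ∧
      ∀ ξ' : V → ℝ≥0∞, IsAlmostHarmonic A β ξ' → ∃ c : ℝ≥0∞, c ≠ ⊤ ∧ ∀ v, ξ' v = c * ξ v := by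
  have hone : frSeries A o (expb β)⁻¹ o = 1 := frSeries_self_eq_one hpow hlim hrec
  refine ⟨frSeries A o (expb β)⁻¹, isHarmonic_frSeries hcof hA hone, ?_, fun ξ' hξ' =>
    ⟨ξ' o, hξ'.1 o, congrFun (hξ'.eq_smul_frSeries hcof hA hone)⟩⟩
  exact fun h => one_ne_zero (hone.symm.trans (congrFun h o))

/-- Under the standing assumptions, if `A` is recurrent then there is a
non-zero almost `β₀`-harmonic vector for `A`; it is unique up to multiplication by
non-negative scalars, and it is `β₀`-harmonic. -/
theorem stmt8 [Countable V] [DecidableEq V] (A : V → V → ℝ≥0∞)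
    (hst : Standing A) (β₀ : ℝ)
    (hβ₀ : ∀ v ∈ NW A,
      Filter.limsup (fun n : ℕ => Apow A n v v ^ ((n : ℝ)⁻¹)) Filter.atTop = expb β₀)
    (hrec : ∃ v ∈ NW A, ∑' n : ℕ, Apow A n v v * expn β₀ n = ⊤) :
    ∃ ξ : V → ℝ≥0∞, (IsAlmostHarmonic A β₀ ξ ∧ ξ ≠ 0 ∧ IsHarmonic A β₀ ξ) ∧
      ∀ ξ' : V → ℝ≥0∞, IsAlmostHarmonic A β₀ ξ' → ξ' ≠ 0 →
        ∃ c : ℝ≥0∞, c ≠ ⊤ ∧ ∀ v, ξ' v = c * ξ v := by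
  obtain ⟨hcof, -, hfin, hpow⟩ := hst
  obtain ⟨o, ho, htop⟩ := hrec
  obtain ⟨ξ, hξ, hne, huniq⟩ := stmt8_general hcof hfin (hpow · o o) (hβ₀ o ho).le htop
  exact ⟨ξ, ⟨hξ.isAlmostHarmonic, hne, hξ⟩, fun ξ' hξ' _ => huniq ξ' hξ'⟩
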